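/- arXiv:2011.10703 — 3 statements merged into one kernel-verified Lean document; each statement's English description precedes it below -/
import Mathlib

section
/- Let n be a natural number and let v : Fin n → ℂ be a point of affine n-space all of whose coordinates are algebraic over ℚ. Suppose that for every prime number p there exists a ring isomorphism σ : ℂ ≃+* AlgebraicClosure(ℚ_p) such that for every i, σ(v i) lies in the image of the canonical map ℚ_p → AlgebraicClosure(ℚ_p). Then every coordinate v i lies in the image of ℚ in ℂ, i.e. v is defined over ℚ. -/
/-!
Let `K` be a number field such that every prime `p` admits a ring homomorphism `𝓞 K →+* 𝔽_p`, that
is, a prime `P p` of norm `p`. Multiplicativity gives an ideal `I m` of norm `m` for each `m ≥ 1`.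
If `p` runs over the primes with a second prime `Q p` of norm `p`, the ideals `I m * Q p` are
pairwise distinct and have norm `m * p`. As the number of ideals of norm at most `x` is
asymptotically linear in `x`, the sum of `1 / p` over these `p` converges.

On the other hand, for every number field `L`, the sum of `1 / p` over the primes `p` with a
homomorphism `𝓞 L →+* 𝔽_p` diverges. Two distinct embeddings of `K` into `L` would turn each such
homomorphism, apart from finitely many `p`, into two distinct homomorphisms `𝓞 K →+* 𝔽_p`. So
there is only one embedding, and `K = ℚ`. A root in `ℚ_p` of the minimal polynomial of `x` provides
a homomorphism from `𝓞 ℚ(x)` to `ℤ_p`, hence to `𝔽_p`.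
-/

open Filter Module NumberField UniqueFactorizationMonoid
open scoped Topology nonZeroDivisors

lemma summable_comp_of_ncard_fiber_le {α β : Type*} {π : α → β} {d : ℕ}
    (hfin : ∀ b, (π ⁻¹' {b}).Finite) (hcard : ∀ b, (π ⁻¹' {b}).ncard ≤ d)
    {g : β → ℝ} (hg_nonneg : ∀ b, 0 ≤ g b) (hg : Summable g) :
    Summable (g ∘ π) := by
  have (b : β) : Finite {a // π a = b} := hfin b
  have hconst (b : β) : (fun a : {a // π a = b} ↦ g (π a)) = fun _ ↦ g b :=
    funext fun a ↦ congrArg g a.2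
  rw [← (Equiv.sigmaFiberEquiv π).summable_iff]
  refine (summable_sigma_of_nonneg fun x ↦ hg_nonneg _).2 ⟨fun b ↦ Summable.of_finite,
    (hg.mul_left (d : ℝ)).of_nonneg_of_le (fun b ↦ tsum_nonneg fun a ↦ hg_nonneg _) fun b ↦ ?_⟩
  calc ∑' a : {a // π a = b}, g (π a) = Nat.card {a // π a = b} * g b := by
        rw [hconst, tsum_const, nsmul_eq_mul]
    _ ≤ d * g b := mul_le_mul_of_nonneg_right (Nat.cast_le.2 (hcard b)) (hg_nonneg b)

lemma summable_div_one_sub {ι : Type*} {f : ι → ℝ} (hf : Summable f) (hf0 : ∀ i, 0 ≤ f i) :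
    Summable fun i ↦ f i / (1 - f i) := by
  refine (hf.mul_right 2).of_norm_bounded_eventually ?_
  filter_upwards [hf.tendsto_cofinite_zero.eventually_le_const (show (0 : ℝ) < 1 / 2 by norm_num)]
    with i hi
  rw [Real.norm_of_nonneg (div_nonneg (hf0 i) (by linarith)), div_le_iff₀ (by linarith), mul_assoc]
  exact le_mul_of_one_le_right (hf0 i) (by linarith)

lemma tendsto_natCard_le_div_atTop_zero {ι : Type*} {N : ι → ℝ} (hN : ∀ i, 0 < N i)
    (hsum : Summable fun i ↦ (N i)⁻¹) :
    Tendsto (fun x : ℝ ↦ (Nat.card {i // N i ≤ x} : ℝ) / x) atTop (𝓝 0) := by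
  have hcount (x : ℝ) : (Nat.card {i // N i ≤ x} : ℝ) / x =
      ∑' i, {i | N i ≤ x}.indicator (fun _ ↦ x⁻¹) i := by
    rw [← tsum_subtype, tsum_const, nsmul_eq_mul, div_eq_mul_inv]
    rfl
  simp only [hcount]
  rw [← tsum_zero (α := ℝ) (β := ι)]
  refine tendsto_tsum_of_dominated_convergence hsum (fun i ↦ ?_) ?_
  · refine tendsto_inv_atTop_zero.congr' ?_
    filter_upwards [eventually_ge_atTop (N i)] with x hx
    exact (Set.indicator_of_mem (Set.mem_ofPred.2 hx) _).symm
  · refine Eventually.of_forall fun x i ↦ ?_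
    by_cases hi : N i ≤ x
    · have hmem : i ∈ {i | N i ≤ x} := hi
      rw [Set.indicator_of_mem hmem, Real.norm_of_nonneg (inv_nonneg.2 ((hN i).le.trans hi))]
      exact inv_anti₀ (hN i) hi
    · rw [Set.indicator_of_notMem (by simpa using hi), norm_zero]
      exact inv_nonneg.2 (hN i).le

/- For each `k` there are `⌊x / w k⌋` values `m` with `(m + 1) * w k ≤ x`; summing over `k` and
dividing by `x` bounds `∑ (w k)⁻¹` by the density `c`. -/
lemma summable_inv_of_injective {ι κ : Type*} {N : ι → ℝ} {w : κ → ℝ} {c : ℝ}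
    (hfin : ∀ x, Finite {i // N i ≤ x})
    (hc : Tendsto (fun x : ℝ ↦ (Nat.card {i // N i ≤ x} : ℝ) / x) atTop (𝓝 c))
    (hw : ∀ k, 0 < w k) {F : ℕ × κ → ι} (hF : F.Injective)
    (hN : ∀ m k, N (F (m, k)) ≤ (m + 1) * w k) :
    Summable fun k ↦ (w k)⁻¹ := by
  refine summable_of_sum_le (c := c) (fun k ↦ inv_nonneg.2 (hw k).le) fun u ↦ ?_
  have hfloor : Tendsto (fun x : ℝ ↦ ∑ k ∈ u, (⌊(w k)⁻¹ * x⌋₊ : ℝ) / x) atTop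
      (𝓝 (∑ k ∈ u, (w k)⁻¹)) :=
    tendsto_finsetSum u fun k _ ↦ tendsto_nat_floor_mul_div_atTop (inv_nonneg.2 (hw k).le)
  refine le_of_tendsto_of_tendsto hfloor hc ?_
  filter_upwards [eventually_ge_atTop 0] with x hx
  have hle (y : Σ k : u, Fin ⌊(w k)⁻¹ * x⌋₊) : N (F (y.2, y.1)) ≤ x := by
    obtain ⟨k, m⟩ := y
    have hm : ((m + 1 : ℕ) : ℝ) ≤ (w k)⁻¹ * x := (Nat.le_floor_iff' m.1.succ_ne_zero).1 m.2
    rw [Nat.cast_add_one, le_inv_mul_iff₀' (hw k)] at hm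
    exact (hN m k).trans hm
  have hinj : Function.Injective fun y : Σ k : u, Fin ⌊(w k)⁻¹ * x⌋₊ ↦
      (⟨F (y.2, y.1), hle y⟩ : {i // N i ≤ x}) := by
    rintro ⟨k, m⟩ ⟨k', m'⟩ h
    obtain ⟨hm, hk⟩ := Prod.ext_iff.1 (hF (congrArg Subtype.val h))
    obtain rfl : k = k' := Subtype.ext hk
    exact congrArg (Sigma.mk k) (Fin.ext hm)
  have hcard : ∑ k ∈ u, ⌊(w k)⁻¹ * x⌋₊ ≤ Nat.card {i // N i ≤ x} := by
    have := hfin x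
    simpa [Finset.sum_attach u fun k ↦ ⌊(w k)⁻¹ * x⌋₊] using
      Nat.card_le_card_of_injective _ hinj
  rw [← Finset.sum_div]
  exact div_le_div_of_nonneg_right (mod_cast hcard) hx

section EulerProduct

variable {M : Type*} [CommMonoidWithZero M] [UniqueFactorizationMonoid M] [Subsingleton Mˣ]

lemma prod_factors {x : M} (hx : x ≠ 0) : (factors x).prod = x :=
  associated_iff_eq.1 (factors_prod hx)

lemma sum_le_prod_inv_one_sub {f : M →*₀ ℝ} (hf : ∀ x, 0 ≤ f x) {F T : Finset M}
    (hF : ∀ x ∈ F, x ≠ 0) (hFT : ∀ x ∈ F, ∀ P ∈ factors x, P ∈ T) (hT : ∀ P ∈ T, f P < 1) :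
    ∑ x ∈ F, f x ≤ ∏ P ∈ T, (1 - f P)⁻¹ := by
  classical
  let e (x : M) (P : T) : ℕ := (factors x).count P.1
  let E : ℕ := F.sup fun x ↦ (factors x).card
  have hprod : ∀ x ∈ F, ∏ P : T, P.1 ^ e x P = x := fun x hx ↦ by
    rw [Finset.prod_coe_sort T fun P ↦ P ^ (factors x).count P,
      ← Finset.prod_multiset_count_of_subset _ _ fun P hP ↦ hFT x hx P (Multiset.mem_toFinset.1 hP),
      prod_factors (hF x hx)]
  have hinj : Set.InjOn e F := fun x hx y hy hxy ↦ by
    rw [← hprod x hx, hxy, hprod y hy]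
  have hrange : F.image e ⊆ Fintype.piFinset fun _ ↦ Finset.range (E + 1) := by
    simp only [Finset.image_subset_iff, Fintype.mem_piFinset, Finset.mem_range_succ_iff]
    exact fun x hx P ↦ (Multiset.count_le_card _ _).trans
      (Finset.le_sup (f := fun x ↦ (factors x).card) hx)
  calc ∑ x ∈ F, f x = ∑ x ∈ F, ∏ P : T, f P ^ e x P :=
        Finset.sum_congr rfl fun x hx ↦ by
          conv_lhs => rw [← hprod x hx]
          simp only [map_prod, map_pow]
    _ = ∑ a ∈ F.image e, ∏ P : T, f P ^ a P :=
        (Finset.sum_image (f := fun a : T → ℕ ↦ ∏ P : T, f P ^ a P) hinj).symm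
    _ ≤ ∑ a ∈ Fintype.piFinset fun _ : T ↦ Finset.range (E + 1), ∏ P : T, f P ^ a P :=
        Finset.sum_le_sum_of_subset_of_nonneg hrange fun a _ _ ↦
          Finset.prod_nonneg fun P _ ↦ pow_nonneg (hf P) _
    _ = ∏ P : T, ∑ k ∈ Finset.range (E + 1), f P ^ k :=
        (Finset.prod_univ_sum (fun _ ↦ Finset.range (E + 1)) fun (P : T) k ↦ f P ^ k).symm
    _ ≤ ∏ P : T, (1 - f P)⁻¹ := Finset.prod_le_prod
        (fun P _ ↦ Finset.sum_nonneg fun k _ ↦ pow_nonneg (hf P) k) fun P _ ↦ by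
          rw [← tsum_geometric_of_lt_one (hf P) (hT P P.2)]
          exact (summable_geometric_of_lt_one (hf P) (hT P P.2)).sum_le_tsum _
            fun k _ ↦ pow_nonneg (hf P) k
    _ = ∏ P ∈ T, (1 - f P)⁻¹ := Finset.prod_coe_sort T fun P ↦ (1 - f P)⁻¹

lemma summable_of_summable_prime {f : M →*₀ ℝ} (hf : ∀ x, 0 ≤ f x)
    (hf_lt : ∀ P, Prime P → f P < 1) (hsum : Summable fun P : {P : M // Prime P} ↦ f P) :
    Summable f := by
  classical
  let g : {P : M // Prime P} → ℝ := fun P ↦ f P / (1 - f P)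
  have hg : Summable g := summable_div_one_sub hsum fun P ↦ hf P
  have hg_nonneg (P) : 0 ≤ g P := div_nonneg (hf P) (sub_nonneg.2 (hf_lt P P.2).le)
  refine summable_of_sum_le hf (c := Real.exp (∑' P, g P)) fun F ↦ ?_
  let T : Finset M := F.biUnion fun x ↦ (factors x).toFinset
  have hT : ∀ P ∈ T, Prime P := fun P hP ↦ by
    obtain ⟨x, -, hPx⟩ := Finset.mem_biUnion.1 hP
    exact prime_of_factor P (Multiset.mem_toFinset.1 hPx)
  have hFT : ∀ x ∈ F.erase 0, ∀ P ∈ factors x, P ∈ T := fun x hx P hP ↦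
    Finset.mem_biUnion.2 ⟨x, Finset.mem_of_mem_erase hx, Multiset.mem_toFinset.2 hP⟩
  calc ∑ x ∈ F, f x = ∑ x ∈ F.erase 0, f x := (Finset.sum_erase F (map_zero f)).symm
    _ ≤ ∏ P ∈ T, (1 - f P)⁻¹ := sum_le_prod_inv_one_sub hf
        (fun x hx ↦ Finset.ne_of_mem_erase hx) hFT fun P hP ↦ hf_lt P (hT P hP)
    _ = ∏ P ∈ T.subtype Prime, (1 + g P) := by
        rw [← Finset.prod_subtype_of_mem _ hT]
        refine Finset.prod_congr rfl fun P _ ↦ ?_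
        have : 1 - f P ≠ 0 := (sub_pos.2 (hf_lt P P.2)).ne'
        simp only [g]
        field_simp
        ring
    _ ≤ Real.exp (∑ P ∈ T.subtype Prime, g P) := Real.prod_one_add_le_exp_sum _ fun P ↦ hg_nonneg P
    _ ≤ Real.exp (∑' P, g P) := Real.exp_le_exp.2 (hg.sum_le_tsum _ fun P _ ↦ hg_nonneg P)

end EulerProduct

section IdealCount

variable (K : Type*) [Field K] [NumberField K]

lemma tendsto_natCard_absNorm_le_div_atTop :
    Tendsto (fun x : ℝ ↦ (Nat.card {I : (Ideal (𝓞 K))⁰ // (Ideal.absNorm I.1 : ℝ) ≤ x} : ℝ) / x)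
      atTop (𝓝 (dedekindZeta_residue K)) := by
  rw [dedekindZeta_residue_def]
  exact Ideal.tendsto_norm_le_div_atTop₀ K

lemma not_summable_inv_absNorm : ¬ Summable fun I : Ideal (𝓞 K) ↦ (Ideal.absNorm I : ℝ)⁻¹ := by
  intro h
  have hlim := tendsto_natCard_le_div_atTop_zero
    (N := fun I : (Ideal (𝓞 K))⁰ ↦ (Ideal.absNorm I.1 : ℝ))
    (fun I ↦ Nat.cast_pos.2 (Ideal.absNorm_pos_of_nonZeroDivisors I))
    (h.comp_injective Subtype.val_injective)
  exact (dedekindZeta_residue_pos K).ne'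
    (tendsto_nhds_unique (tendsto_natCard_absNorm_le_div_atTop K) hlim)

lemma not_summable_inv_absNorm_prime :
    ¬ Summable fun P : {P : Ideal (𝓞 K) // Prime P} ↦ (Ideal.absNorm P.1 : ℝ)⁻¹ := by
  -- `0⁻¹ = 0`, so the zero ideal does not contribute.
  let f : Ideal (𝓞 K) →*₀ ℝ :=
    invMonoidWithZeroHom.comp ((Nat.castRingHom ℝ).toMonoidWithZeroHom.comp Ideal.absNorm)
  refine fun h ↦ not_summable_inv_absNorm K (summable_of_summable_prime (f := f)
    (fun I ↦ inv_nonneg.2 (Nat.cast_nonneg _)) (fun P hP ↦ inv_lt_one_of_one_lt₀ ?_) h)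
  have hP0 : Ideal.absNorm P ≠ 0 := mt Ideal.absNorm_eq_zero_iff.1 hP.ne_zero
  have hP1 : Ideal.absNorm P ≠ 1 :=
    mt Ideal.absNorm_eq_one_iff.1 (Ideal.isPrime_of_prime hP).ne_top
  exact Nat.one_lt_cast.2 (by lia)

end IdealCount

lemma ncard_primesOver_le_finrank {R S : Type*} [CommRing R] [IsDomain R] [CommRing S]
    [Algebra R S] [Module.Finite R S] [Module.Flat R S] (p : Ideal R) [p.IsPrime] :
    (p.primesOver S).ncard ≤ finrank R S := by
  have := (Algebra.QuasiFinite.finite_primesOver (S := S) p).fintype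
  rw [← Ideal.sum_ramification_inertia_eq_finrank p S, ← Nat.card_coe_set_eq,
    Nat.card_eq_fintype_card, Fintype.card_eq_sum_ones]
  exact Finset.sum_le_sum fun q _ ↦
    Nat.mul_pos (q.1.ramificationIdx_pos R) (q.1.inertiaDeg_pos R)

section Dedekind

variable {S : Type*} [CommRing S] [IsDedekindDomain S] [Module.Free ℤ S]

lemma absNorm_ker {p : ℕ} (φ : S →+* ZMod p) : Ideal.absNorm (RingHom.ker φ) = p := by
  rw [Ideal.absNorm_apply, Submodule.cardQuot_apply, Nat.card_congr
    (RingHom.quotientKerEquivOfSurjective (ZMod.ringHom_surjective φ)).toEquiv, Nat.card_zmod]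

lemma nonempty_ringHom_zmod_of_absNorm_eq {p : ℕ} (hp : p.Prime) {I : Ideal S}
    (hI : Ideal.absNorm I = p) : Nonempty (S →+* ZMod p) := by
  rw [Ideal.absNorm_apply, Submodule.cardQuot_apply] at hI
  have : Finite (S ⧸ I) := Nat.finite_of_card_ne_zero (hI ▸ hp.ne_zero)
  have : Fintype (S ⧸ I) := Fintype.ofFinite _
  let e : ZMod p ≃+* S ⧸ I :=
    ZMod.ringEquivOfPrime _ hp (Nat.card_eq_fintype_card.symm.trans hI)
  exact ⟨e.symm.toRingHom.comp (Ideal.Quotient.mk I)⟩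

lemma inv_absNorm_le_indicator_add_inv_sq [Module.Finite ℤ S] {p : ℕ} (hp : p.Prime)
    (P : Ideal S) [P.IsPrime] [P.LiesOver (Ideal.span {(p : ℤ)})] :
    (Ideal.absNorm P : ℝ)⁻¹ ≤
      Set.indicator {p : ℕ | p.Prime ∧ Nonempty (S →+* ZMod p)} (fun p ↦ (p : ℝ)⁻¹) p +
        ((p : ℝ) ^ 2)⁻¹ := by
  have hnorm : p ^ P.inertiaDeg ℤ = Ideal.absNorm P := by
    rw [← Ideal.absNorm_pow_inertiaDeg (Ideal.span {(p : ℤ)}) P, Ideal.absNorm_span_natCast,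
      finrank_self, pow_one]
  have hp1 : (1 : ℝ) ≤ p := mod_cast hp.one_le
  rw [← hnorm, Nat.cast_pow]
  obtain hdeg | hdeg : P.inertiaDeg ℤ = 1 ∨ 2 ≤ P.inertiaDeg ℤ := by
    have := P.inertiaDeg_pos ℤ
    lia
  · have hp_mem : p ∈ {p : ℕ | p.Prime ∧ Nonempty (S →+* ZMod p)} :=
      ⟨hp, nonempty_ringHom_zmod_of_absNorm_eq hp (by rw [← hnorm, hdeg, pow_one])⟩
    rw [hdeg, pow_one, Set.indicator_of_mem hp_mem]
    exact le_add_of_nonneg_right (by positivity)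
  · refine le_add_of_nonneg_of_le (Set.indicator_nonneg (fun _ _ ↦ by positivity) _) ?_
    exact inv_anti₀ (by positivity) (pow_le_pow_right₀ hp1 hdeg)

end Dedekind

lemma not_summable_inv_of_nonempty_ringHom_zmod (K : Type*) [Field K] [NumberField K] :
    ¬ Summable (Set.indicator {p : ℕ | p.Prime ∧ Nonempty (𝓞 K →+* ZMod p)}
      fun p ↦ (p : ℝ)⁻¹) := by
  intro h
  let π (P : {P : Ideal (𝓞 K) // Prime P}) : ℕ := Ideal.absNorm (P.1.under ℤ)
  have hprime (P : {P : Ideal (𝓞 K) // Prime P}) : P.1.IsPrime := Ideal.isPrime_of_prime P.2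
  have hπ (P) : (π P).Prime :=
    have : NeZero P.1 := ⟨P.2.ne_zero⟩
    Nat.absNorm_under_prime P.1
  have hover (p : ℕ) :
      Set.MapsTo Subtype.val (π ⁻¹' {p}) ((Ideal.span {(p : ℤ)}).primesOver (𝓞 K)) := by
    rintro P rfl
    exact ⟨hprime P, Int.liesOver_span_absNorm P.1⟩
  have hfin (p : ℕ) : ((Ideal.span {(p : ℤ)}).primesOver (𝓞 K)).Finite :=
    Algebra.QuasiFinite.finite_primesOver _
  have hfiber (p : ℕ) : (π ⁻¹' {p}).ncard ≤ finrank ℤ (𝓞 K) := by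
    obtain hempty | ⟨P, rfl⟩ := (π ⁻¹' {p}).eq_empty_or_nonempty
    · simp [hempty]
    have : (Ideal.span {(π P : ℤ)}).IsPrime := by
      rw [Int.ideal_span_absNorm_eq_self]
      infer_instance
    exact (Set.ncard_le_ncard_of_injOn _ (hover _) Subtype.val_injective.injOn (hfin _)).trans
      (ncard_primesOver_le_finrank _)
  refine not_summable_inv_absNorm_prime K (.of_nonneg_of_le (fun P ↦ by positivity)
    (fun P ↦ ?_) (summable_comp_of_ncard_fiber_le
      (fun p ↦ (hfin p).of_injOn (hover p) Subtype.val_injective.injOn) hfiber (fun p ↦ ?_)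
      (h.add (Real.summable_nat_pow_inv.2 one_lt_two))))
  · exact inv_absNorm_le_indicator_add_inv_sq (hπ P) P.1
  · exact add_nonneg (Set.indicator_nonneg (fun _ _ ↦ by positivity) _) (by positivity)

lemma map_factorization_prod_pow {M F : Type*} [CommMonoid M] [FunLike F M ℕ]
    [MonoidHomClass F M ℕ] {N : F} {P : ℕ → M} (hP : ∀ p, p.Prime → N (P p) = p)
    {m : ℕ} (hm : m ≠ 0) : N (m.factorization.prod fun p e ↦ P p ^ e) = m := by
  conv_rhs => rw [← Nat.prod_factorization_pow_eq_self hm]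
  rw [map_finsuppProd]
  exact Finsupp.prod_congr fun p hp ↦ by
    rw [map_pow, hP p (Nat.prime_of_mem_primeFactors hp)]

lemma exists_dvd_of_dvd_factorization_prod_pow {M : Type*} [CommMonoidWithZero M]
    {P : ℕ → M} {Q : M} (hQ : Prime Q) {m : ℕ}
    (h : Q ∣ m.factorization.prod fun p e ↦ P p ^ e) : ∃ p, p.Prime ∧ Q ∣ P p := by
  obtain ⟨p, hp, hdvd⟩ := (hQ.dvd_finsetProd_iff _).1 h
  exact ⟨p, Nat.prime_of_mem_primeFactors hp, hQ.dvd_of_dvd_pow hdvd⟩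

lemma injective_factorization_prod_pow_mul {S : Type*} [CommRing S] [IsDedekindDomain S]
    [Module.Free ℤ S] {κ : Type*} {P : ℕ → Ideal S} {q : κ → ℕ} {Q : κ → Ideal S}
    (hP : ∀ p, p.Prime → Ideal.absNorm (P p) = p) (hq : ∀ k, (q k).Prime) (hq_inj : q.Injective)
    (hQ : ∀ k, Ideal.absNorm (Q k) = q k) (hQP : ∀ k, Q k ≠ P (q k)) :
    Function.Injective fun y : ℕ × κ ↦
      ((y.1 + 1).factorization.prod fun p e ↦ P p ^ e) * Q y.2 := by
  have hprime {I : Ideal S} {p : ℕ} (hp : p.Prime) (hI : Ideal.absNorm I = p) : Prime I :=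
    (Ideal.irreducible_of_irreducible_absNorm (hI ▸ hp)).prime
  have eq_of_dvd {I J : Ideal S} {p r : ℕ} (hp : p.Prime) (hI : Ideal.absNorm I = p) (hr : r.Prime)
      (hJ : Ideal.absNorm J = r) (h : I ∣ J) : I = J :=
    associated_iff_eq.1 ((hprime hp hI).associated_of_dvd (hprime hr hJ) h)
  rintro ⟨m, k⟩ ⟨m', k'⟩ h
  have hdvd : Q k ∣ ((m' + 1).factorization.prod fun p e ↦ P p ^ e) * Q k' :=
    ⟨_, h.symm.trans (mul_comm _ _)⟩
  obtain hdvd | hdvd := (hprime (hq k) (hQ k)).dvd_or_dvd hdvd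
  · obtain ⟨p, hp, hdvd⟩ := exists_dvd_of_dvd_factorization_prod_pow (hprime (hq k) (hQ k)) hdvd
    have hQp : Q k = P p := eq_of_dvd (hq k) (hQ k) hp (hP p hp) hdvd
    have hqp : q k = p := by rw [← hQ k, hQp, hP p hp]
    exact absurd hQp (hqp ▸ hQP k)
  · have hQQ : Q k = Q k' := eq_of_dvd (hq k) (hQ k) (hq k') (hQ k') hdvd
    obtain rfl : k = k' := hq_inj (by rw [← hQ, ← hQ, hQQ])
    have hmm := congrArg Ideal.absNorm h
    simp only [map_mul, map_factorization_prod_pow hP (Nat.succ_ne_zero _), hQ] at hmm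
    have := Nat.eq_of_mul_eq_mul_right (hq k).pos hmm
    rw [Nat.succ_injective this]

lemma summable_inv_of_nontrivial_ringHom_zmod {K : Type*} [Field K] [NumberField K]
    (h : ∀ p : ℕ, p.Prime → Nonempty (𝓞 K →+* ZMod p)) :
    Summable (Set.indicator {p : ℕ | p.Prime ∧ Nontrivial (𝓞 K →+* ZMod p)}
      fun p ↦ (p : ℝ)⁻¹) := by
  classical
  let T := {p : ℕ | p.Prime ∧ Nontrivial (𝓞 K →+* ZMod p)}
  let P (p : ℕ) : Ideal (𝓞 K) := if hp : p.Prime then RingHom.ker (h p hp).some else ⊤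
  have hPker {p : ℕ} (hp : p.Prime) : P p = RingHom.ker (h p hp).some := dif_pos hp
  have hP (p : ℕ) (hp : p.Prime) : Ideal.absNorm (P p) = p := by
    rw [hPker hp, absNorm_ker]
  have hexists (p : T) : ∃ Q : Ideal (𝓞 K), Ideal.absNorm Q = p ∧ Q ≠ P p := by
    obtain ⟨p, hp, hnontriv⟩ := p
    obtain ⟨φ, hφ⟩ := exists_ne (h p hp).some
    exact ⟨RingHom.ker φ, absNorm_ker φ, hPker hp ▸ mt (ZMod.ringHom_eq_of_ker_eq _ _) hφ⟩
  choose Q hQ hQP using hexists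
  let I (y : ℕ × T) : Ideal (𝓞 K) := ((y.1 + 1).factorization.prod fun p e ↦ P p ^ e) * Q y.2
  have hI (y : ℕ × T) : Ideal.absNorm (I y) = (y.1 + 1) * y.2 := by
    rw [map_mul, map_factorization_prod_pow hP (Nat.succ_ne_zero _), hQ]
  have hI_inj : I.Injective := injective_factorization_prod_pow_mul hP (fun p : T ↦ p.2.1)
    Subtype.val_injective hQ hQP
  have hI_mem (y : ℕ × T) : I y ∈ (Ideal (𝓞 K))⁰ := by
    rw [← Ideal.absNorm_ne_zero_iff_mem_nonZeroDivisors, hI]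
    exact Nat.mul_ne_zero (Nat.succ_ne_zero _) y.2.2.1.ne_zero
  have hfin (x : ℝ) : Finite {J : (Ideal (𝓞 K))⁰ // (Ideal.absNorm J.1 : ℝ) ≤ x} :=
    ((Ideal.finite_setOfPred_absNorm_le₀ ⌊x⌋₊).subset fun J hJ ↦ Nat.le_floor hJ).to_subtype
  exact summable_subtype_iff_indicator.1 (summable_inv_of_injective hfin
    (tendsto_natCard_absNorm_le_div_atTop K) (w := fun p : T ↦ (p : ℝ))
    (fun p ↦ Nat.cast_pos.2 p.2.1.pos) (F := fun y ↦ ⟨I y, hI_mem y⟩)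
    (fun y y' hy ↦ hI_inj (congrArg Subtype.val hy))
    fun m p ↦ by simp [hI])

lemma nonempty_ringHom_zmod_of_ringHom_padic {R : Type*} [CommRing R] [Algebra.IsIntegral ℤ R]
    {p : ℕ} [Fact p.Prime] (f : R →+* ℚ_[p]) : Nonempty (R →+* ZMod p) := by
  have hint (x : R) : f x ∈ PadicInt.subring p := by
    have h : IsIntegral ℤ_[p] (f x) :=
      ((Algebra.IsIntegral.isIntegral (R := ℤ) x).map f.toIntAlgHom).tower_top
    obtain ⟨y, hy⟩ := IsIntegrallyClosed.isIntegral_iff.1 h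
    exact hy ▸ y.2
  exact ⟨PadicInt.toZMod.comp (f.codRestrict (PadicInt.subring p) hint)⟩

lemma eventually_nontrivial_ringHom_zmod {R S : Type*} [CommRing R] [CommRing S] [IsDomain S]
    [Algebra.IsAlgebraic ℤ S] {f g : R →+* S} (hfg : f ≠ g) :
    ∀ᶠ p : ℕ in cofinite, Nonempty (S →+* ZMod p) → Nontrivial (R →+* ZMod p) := by
  obtain ⟨α, hα⟩ := DFunLike.ne_iff.1 hfg
  obtain ⟨n, hn, hdvd⟩ := (Algebra.IsAlgebraic.isAlgebraic (R := ℤ) (f α - g α)).exists_nonzero_dvd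
    (mem_nonZeroDivisors_of_ne_zero (sub_ne_zero.2 hα))
  filter_upwards [(Set.finite_le_nat n.natAbs).compl_mem_cofinite] with p hp ⟨φ⟩
  refine ⟨φ.comp f, φ.comp g, fun heq ↦ hp ?_⟩
  have hφ : φ (f α - g α) = 0 := by
    rw [map_sub, sub_eq_zero]
    exact DFunLike.congr_fun heq α
  have hφn : ((n : ℤ) : ZMod p) = 0 := by
    rw [← map_intCast φ, ← zero_dvd_iff, ← hφ]
    exact map_dvd φ hdvd
  exact Nat.le_of_dvd (Int.natAbs_pos.2 hn)
    (Int.natCast_dvd.1 ((ZMod.intCast_zmod_eq_zero_iff_dvd n p).1 hφn))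

theorem finrank_eq_one_of_nonempty_ringHom_zmod {K : Type*} [Field K] [NumberField K]
    (h : ∀ p : ℕ, p.Prime → Nonempty (𝓞 K →+* ZMod p)) : finrank ℚ K = 1 := by
  let L := IntermediateField.normalClosure ℚ K (AlgebraicClosure ℚ)
  have hL : NumberField L := { to_charZero := inferInstance, to_finiteDimensional := inferInstance }
  have hnormal : IsNormalClosure ℚ K L :=
    Algebra.IsAlgebraic.isNormalClosure_normalClosure fun x ↦ IsAlgClosed.splits _
  have hcard : Nat.card (K →ₐ[ℚ] L) = finrank ℚ K :=
    AlgHom.natCard_of_splits ℚ K L hnormal.splits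
  by_contra hK
  have : Nontrivial (K →ₐ[ℚ] L) := by
    rw [← Finite.one_lt_card_iff_nontrivial, hcard]
    have : 0 < finrank ℚ K := finrank_pos
    lia
  obtain ⟨f, g, hfg⟩ := exists_pair_ne (K →ₐ[ℚ] L)
  have hne : RingOfIntegers.mapRingHom (f : K →+* L) ≠ RingOfIntegers.mapRingHom (g : K →+* L) :=
    fun heq ↦ hfg <| AlgHom.coe_ringHom_injective <| IsFractionRing.ringHom_ext (A := 𝓞 K) fun x ↦
      congrArg (algebraMap (𝓞 L) L) (DFunLike.congr_fun heq x)
  refine not_summable_inv_of_nonempty_ringHom_zmod L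
    ((summable_inv_of_nontrivial_ringHom_zmod h).of_norm_bounded_eventually ?_)
  filter_upwards [eventually_nontrivial_ringHom_zmod hne] with p hp
  rw [Real.norm_of_nonneg (Set.indicator_nonneg (fun _ _ ↦ by positivity) _)]
  refine Set.indicator_apply_le' (fun ⟨hprime, hφ⟩ ↦ ?_)
    fun _ ↦ Set.indicator_nonneg (fun _ _ ↦ by positivity) _
  have hmem : p ∈ {p : ℕ | p.Prime ∧ Nontrivial (𝓞 K →+* ZMod p)} := ⟨hprime, hp hφ⟩
  rw [Set.indicator_of_mem hmem]

lemma natDegree_eq_one_of_forall_exists_aeval_padic_eq_zero {f : Polynomial ℚ} (hf : Irreducible f)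
    (h : ∀ (p : ℕ) [Fact p.Prime], ∃ y : ℚ_[p], f.aeval y = 0) : f.natDegree = 1 := by
  have : Fact (Irreducible f) := ⟨hf⟩
  have : NumberField (AdjoinRoot f) :=
    { to_charZero := inferInstance
      to_finiteDimensional := (AdjoinRoot.powerBasis hf.ne_zero).finite }
  rw [← AdjoinRoot.powerBasis_dim hf.ne_zero, ← PowerBasis.finrank]
  refine finrank_eq_one_of_nonempty_ringHom_zmod fun p hp ↦ ?_
  have : Fact p.Prime := ⟨hp⟩
  obtain ⟨y, hy⟩ := h p
  exact nonempty_ringHom_zmod_of_ringHom_padic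
    ((AdjoinRoot.lift (algebraMap ℚ ℚ_[p]) y hy).comp (algebraMap (𝓞 (AdjoinRoot f)) _))

theorem stmt_0_general {F : Type*} [Field F] [CharZero F] {x : F} (hx : IsAlgebraic ℚ x)
    (h : ∀ (p : ℕ) [Fact p.Prime], ∃ σ : F →+* AlgebraicClosure ℚ_[p],
      σ x ∈ Set.range (algebraMap ℚ_[p] (AlgebraicClosure ℚ_[p]))) :
    x ∈ Set.range ((↑) : ℚ → F) := by
  refine minpoly.natDegree_eq_one_iff.1 (natDegree_eq_one_of_forall_exists_aeval_padic_eq_zero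
    (minpoly.irreducible hx.isIntegral) fun p _ ↦ ?_)
  obtain ⟨σ, y, hy⟩ := h p
  have hroot : (minpoly ℚ x).aeval (algebraMap ℚ_[p] (AlgebraicClosure ℚ_[p]) y) = 0 := by
    rw [hy]
    exact (Polynomial.aeval_algHom_apply σ.toRatAlgHom x _).trans (by simp)
  rw [Polynomial.aeval_algebraMap_apply] at hroot
  exact ⟨y, (map_eq_zero _).1 hroot⟩

/-- Claim 2.4: a point of affine `n`-space with algebraic coordinates which, for every
prime `p`, becomes a `ℚ_p`-rational point under some field isomorphism `ℂ ≃ ℚ̄_p`,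
is already a `ℚ`-rational point. -/
theorem stmt_0 (n : ℕ) (v : Fin n → ℂ) (halg : ∀ i, IsAlgebraic ℚ (v i))
    (h : ∀ (p : ℕ) [Fact p.Prime],
      ∃ σ : ℂ ≃+* AlgebraicClosure ℚ_[p],
        ∀ i, σ (v i) ∈ Set.range (algebraMap ℚ_[p] (AlgebraicClosure ℚ_[p]))) :
    ∀ i, v i ∈ Set.range ((↑) : ℚ → ℂ) :=
  fun i ↦ stmt_0_general (halg i) fun p _ ↦
    let ⟨σ, hσ⟩ := h p
    ⟨σ, hσ i⟩
end

section
/- Let H be a group, let Δ ≤ H × H be the diagonal subgroup (the range of h ↦ (h, h)), and let Z denote the center of H. Then the normalizer of Δ in H × H equals the join (the subgroup generated by the union) of Δ and the product subgroup Z × Z. -/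
/-!
More generally, let `f : G →* H`. Conjugation by `(a, b)` sends `(g, f g)` to
`(a * g * a⁻¹, b * f g * b⁻¹)`, which lies on the graph of `f` exactly when conjugation by `f a` and
by `b` agree at `f g`. Hence `(a, b)` normalizes the graph if and only if `c = (f a)⁻¹ * b`
centralizes the image of `f`, and then `(a, b) = (a, f a) * (1, c)`. The diagonal is the graph of
the identity.
-/

section NormalizerGraph

open Subgroup

variable {G H : Type*} [Group G] [Group H]

lemma conj_eq_conj_iff_commute (a b h : G) :
    a * h * a⁻¹ = b * h * b⁻¹ ↔ Commute h (a⁻¹ * b) := by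
  rw [eq_mul_inv_iff_mul_eq, commute_iff_eq, mul_assoc a⁻¹ b h, eq_inv_mul_iff_mul_eq]
  simp only [mul_assoc]

lemma map_center_le_centralizer_range (f : G →* H) :
    (center G).map f ≤ centralizer (f.range : Set H) := by
  simpa only [centralizer_univ, Set.image_univ, MonoidHom.coe_range] using
    map_centralizer_le_centralizer_image Set.univ f

lemma mem_normalizer_graph_iff (f : G →* H) (a : G) (b : H) :
    (a, b) ∈ normalizer (f.graph : Set (G × H)) ↔
      (f a)⁻¹ * b ∈ centralizer (f.range : Set H) := by
  have mem_centralizer_iff_conj_eq : (f a)⁻¹ * b ∈ centralizer (f.range : Set H) ↔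
      ∀ g, f a * f g * (f a)⁻¹ = b * f g * b⁻¹ := by
    simp only [mem_centralizer_iff, MonoidHom.coe_range, Set.forall_mem_range,
      conj_eq_conj_iff_commute, commute_iff_eq]
  simp only [mem_centralizer_iff_conj_eq, mem_normalizer_iff, Prod.forall, MonoidHom.mem_graph,
    Prod.mk_mul_mk, Prod.inv_mk, map_mul, map_inv]
  constructor
  · intro conj_mem_iff g
    exact (conj_mem_iff g (f g)).1 rfl
  · intro conj_eq g h
    rw [conj_eq g, conj_injective.eq_iff]

theorem stmt_5_general (f : G →* H) :
    normalizer (f.graph : Set (G × H)) =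
      f.graph ⊔ (center G).prod (centralizer (f.range : Set H)) := by
  apply le_antisymm
  · rintro ⟨a, b⟩ hab
    have factorization : ((a, b) : G × H) = (a, f a) * (1, (f a)⁻¹ * b) := by
      rw [Prod.mk_mul_mk, mul_one, mul_inv_cancel_left]
    rw [factorization]
    exact mul_mem_sup rfl ⟨one_mem _, (mem_normalizer_graph_iff f a b).1 hab⟩
  · refine sup_le le_normalizer ?_
    rintro ⟨a, b⟩ ⟨ha, hb⟩
    have hfa : f a ∈ centralizer (f.range : Set H) :=
      map_center_le_centralizer_range f (mem_map_of_mem f ha)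
    exact (mem_normalizer_graph_iff f a b).2 (mul_mem (inv_mem hfa) hb)

end NormalizerGraph

/-- The normalizer of the diagonal subgroup of `H × H` is generated by the diagonal
together with the product of centers `Z(H) × Z(H)`. -/
theorem stmt_5 (H : Type*) [Group H] :
    Subgroup.normalizer (((MonoidHom.id H).prod (MonoidHom.id H)).range : Set (H × H)) =
      ((MonoidHom.id H).prod (MonoidHom.id H)).range ⊔
        (Subgroup.center H).prod (Subgroup.center H) := by
  simpa only [MonoidHom.graph_eq_range_prod, MonoidHom.coe_range, MonoidHom.coe_id, Set.range_id,
    Subgroup.centralizer_univ] using stmt_5_general (MonoidHom.id H)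
end

section
/- Let k be a field, let V and W be k-vector spaces, and let S be a set of linear endomorphisms of V and S' a set of linear endomorphisms of W. Let V^S = {x ∈ V : g x = x for all g ∈ S} and W^{S'} = {y ∈ W : g' y = y for all g' ∈ S'} be the corresponding fixed subspaces. Then the set of elements t ∈ V ⊗[k] W satisfying (g ⊗ id)(t) = t for all g ∈ S and (id ⊗ g')(t) = t for all g' ∈ S' is exactly the image of V^S ⊗[k] W^{S'} in V ⊗[k] W (the subspace spanned by pure tensors x ⊗ y with x ∈ V^S and y ∈ W^{S'}). -/
open TensorProduct

/-!
For a projective module `P` (such as any vector space), the slices `(f ⊗ id) t ∈ N`, `f ∈ P*`,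
detect whether `t ∈ P ⊗ N` comes from `P ⊗ N'` for a submodule `N' ≤ N`. Slicing commutes with
`id ⊗ g'`, so the slices of a tensor fixed by every `id ⊗ g'` are fixed by `S'`: such tensors come
from `V ⊗ W^{S'}`. This space embeds in `V ⊗ W` by flatness of `V`, so the same argument in the
other factor applies inside it.
-/

section Semiring

variable {R M : Type*} [Semiring R] [AddCommMonoid M] [Module R M]

/-- The submodule `M^S` of vectors fixed by every endomorphism in `S`. -/
def jointFixedSubmodule (S : Set (M →ₗ[R] M)) : Submodule R M :=
  ⨅ g ∈ S, LinearMap.fixedSubmodule g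

theorem mem_jointFixedSubmodule {S : Set (M →ₗ[R] M)} {x : M} :
    x ∈ jointFixedSubmodule S ↔ ∀ g ∈ S, g x = x := by
  simp only [jointFixedSubmodule, Submodule.mem_iInf, LinearMap.mem_fixedSubmodule_iff]

theorem comp_subtype_jointFixedSubmodule {S : Set (M →ₗ[R] M)} {g : M →ₗ[R] M} (hg : g ∈ S) :
    g ∘ₗ (jointFixedSubmodule S).subtype = (jointFixedSubmodule S).subtype :=
  LinearMap.ext fun x => mem_jointFixedSubmodule.mp x.2 g hg

end Semiring

section CommSemiring

variable {R M N P : Type*} [CommSemiring R] [AddCommMonoid M] [Module R M]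
  [AddCommMonoid N] [Module R N] [AddCommMonoid P] [Module R P]

theorem range_mapIncl_eq_span_tmul (p : Submodule R M) (q : Submodule R N) :
    (TensorProduct.mapIncl p q).range =
      Submodule.span R {t : M ⊗[R] N | ∃ x ∈ p, ∃ y ∈ q, t = x ⊗ₜ[R] y} := by
  rw [TensorProduct.range_map_eq_span_tmul]
  simp only [Submodule.subtype_apply, Subtype.exists, exists_prop, eq_comm]

/-- The slice map `P ⊗ N → N`, `p ⊗ n ↦ f p • n`, of a functional `f` on `P`; applied to a tensor,
it plays the role of a coordinate, with no choice of a basis of `P`. -/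
noncomputable def sliceMap (N : Type*) [AddCommMonoid N] [Module R N] (f : Module.Dual R P) :
    P ⊗[R] N →ₗ[R] N :=
  TensorProduct.lid R N ∘ₗ f.rTensor N

theorem sliceMap_lTensor (f : Module.Dual R P) (g : M →ₗ[R] N) (t : P ⊗[R] M) :
    sliceMap N f (g.lTensor P t) = g (sliceMap M f t) := by
  have : sliceMap N f ∘ₗ g.lTensor P = g ∘ₗ sliceMap M f :=
    TensorProduct.ext' fun p m => by simp [sliceMap]
  exact LinearMap.congr_fun this t

theorem eq_of_forall_sliceMap_eq [Module.Projective R P] {t u : P ⊗[R] N}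
    (h : ∀ f : Module.Dual R P, sliceMap N f t = sliceMap N f u) : t = u := by
  classical
  obtain ⟨s, hs⟩ := Module.projective_def'.mp ‹Module.Projective R P›
  have rTensor_injective : Function.Injective (s.rTensor N) :=
    Function.LeftInverse.injective (g := (Finsupp.linearCombination R id).rTensor N) fun v => by
      rw [← LinearMap.rTensor_comp_apply, hs, LinearMap.rTensor_id_apply]
  apply rTensor_injective
  apply (TensorProduct.finsuppScalarLeft R N P).injective
  ext p
  simpa only [TensorProduct.finsuppScalarLeft_apply, sliceMap, LinearMap.rTensor_comp_apply,
    LinearMap.comp_apply, LinearEquiv.coe_coe] using h (Finsupp.lapply p ∘ₗ s)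

end CommSemiring

section CommRing

variable {R M N P : Type*} [CommRing R] [AddCommGroup M] [Module R M]
  [AddCommGroup N] [Module R N] [AddCommGroup P] [Module R P]

theorem mem_range_lTensor_subtype_of_forall_sliceMap_mem [Module.Projective R P]
    {N' : Submodule R N} {t : P ⊗[R] N} (h : ∀ f : Module.Dual R P, sliceMap N f t ∈ N') :
    t ∈ (N'.subtype.lTensor P).range := by
  rw [← lTensor_mkQ, LinearMap.mem_ker]
  refine eq_of_forall_sliceMap_eq fun f => ?_
  rw [sliceMap_lTensor, map_zero, Submodule.mkQ_apply, Submodule.Quotient.mk_eq_zero]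
  exact h f

theorem mem_range_lTensor_of_forall_lTensor_eq [Module.Projective R P] {S : Set (N →ₗ[R] N)}
    {t : P ⊗[R] N} (h : ∀ g ∈ S, g.lTensor P t = t) :
    t ∈ ((jointFixedSubmodule S).subtype.lTensor P).range := by
  refine mem_range_lTensor_subtype_of_forall_sliceMap_mem fun f => ?_
  refine mem_jointFixedSubmodule.mpr fun g hg => ?_
  rw [← sliceMap_lTensor, h g hg]

theorem mem_range_rTensor_of_forall_rTensor_eq [Module.Projective R P] {S : Set (N →ₗ[R] N)}
    {t : N ⊗[R] P} (h : ∀ g ∈ S, g.rTensor P t = t) :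
    t ∈ ((jointFixedSubmodule S).subtype.rTensor P).range := by
  obtain ⟨u, hu⟩ := mem_range_lTensor_of_forall_lTensor_eq (S := S)
    (t := TensorProduct.comm R N P t) fun g hg => by
      rw [LinearMap.lTensor, TensorProduct.map_comm, ← LinearMap.rTensor, h g hg]
  refine ⟨TensorProduct.comm R P _ u, ?_⟩
  rw [LinearMap.rTensor, TensorProduct.map_comm, ← LinearMap.lTensor, hu,
    TensorProduct.comm_comm]

theorem mem_range_mapIncl_jointFixedSubmodule {S : Set (M →ₗ[R] M)} {S' : Set (N →ₗ[R] N)}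
    [Module.Projective R M] [Module.Projective R (jointFixedSubmodule S')] {t : M ⊗[R] N}
    (hS : ∀ g ∈ S, g.rTensor N t = t) (hS' : ∀ g' ∈ S', g'.lTensor M t = t) :
    t ∈ (TensorProduct.mapIncl (jointFixedSubmodule S) (jointFixedSubmodule S')).range := by
  obtain ⟨u, rfl⟩ := mem_range_lTensor_of_forall_lTensor_eq hS'
  have lTensor_injective : Function.Injective ((jointFixedSubmodule S').subtype.lTensor M) :=
    Module.Flat.lTensor_preserves_injective_linearMap _ Subtype.val_injective
  have u_fixed : ∀ g ∈ S, g.rTensor (jointFixedSubmodule S') u = u := fun g hg => by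
    apply lTensor_injective
    rw [← LinearMap.comp_apply, LinearMap.lTensor_comp_rTensor, ← LinearMap.rTensor_comp_lTensor,
      LinearMap.comp_apply, hS g hg]
  obtain ⟨v, rfl⟩ := mem_range_rTensor_of_forall_rTensor_eq u_fixed
  exact ⟨v, by rw [← LinearMap.comp_apply, LinearMap.lTensor_comp_rTensor]⟩

theorem mem_range_mapIncl_jointFixedSubmodule_iff {S : Set (M →ₗ[R] M)} {S' : Set (N →ₗ[R] N)}
    [Module.Projective R M] [Module.Projective R (jointFixedSubmodule S')] {t : M ⊗[R] N} :
    t ∈ (TensorProduct.mapIncl (jointFixedSubmodule S) (jointFixedSubmodule S')).range ↔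
      (∀ g ∈ S, g.rTensor N t = t) ∧ ∀ g' ∈ S', g'.lTensor M t = t := by
  refine ⟨?_, fun h => mem_range_mapIncl_jointFixedSubmodule h.1 h.2⟩
  rintro ⟨v, rfl⟩
  refine ⟨fun g hg => ?_, fun g' hg' => ?_⟩
  · rw [← LinearMap.comp_apply, LinearMap.rTensor_comp_map, comp_subtype_jointFixedSubmodule hg]
  · rw [← LinearMap.comp_apply, LinearMap.lTensor_comp_map, comp_subtype_jointFixedSubmodule hg']

theorem stmt_7_general (S : Set (M →ₗ[R] M)) (S' : Set (N →ₗ[R] N))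
    [Module.Projective R M] [Module.Projective R (jointFixedSubmodule S')] :
    {t : M ⊗[R] N | (∀ g ∈ S, TensorProduct.map g LinearMap.id t = t) ∧
        (∀ g' ∈ S', TensorProduct.map LinearMap.id g' t = t)} =
      ↑(Submodule.span R {t : M ⊗[R] N |
          ∃ x ∈ {x : M | ∀ g ∈ S, g x = x},
          ∃ y ∈ {y : N | ∀ g' ∈ S', g' y = y}, t = x ⊗ₜ[R] y}) := by
  simp only [Set.mem_ofPred_eq, ← mem_jointFixedSubmodule]
  rw [← range_mapIncl_eq_span_tmul]
  exact Set.ext fun t => mem_range_mapIncl_jointFixedSubmodule_iff.symm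

end CommRing

/-- The tensors of `V ⊗ W` fixed by `g ⊗ id` for all `g ∈ S` and by `id ⊗ g'` for all
`g' ∈ S'` are exactly the span of pure tensors `x ⊗ y` with `x` fixed by `S` and `y`
fixed by `S'`. -/
theorem stmt_7 (k : Type*) [Field k] (V W : Type*)
    [AddCommGroup V] [Module k V] [AddCommGroup W] [Module k W]
    (S : Set (V →ₗ[k] V)) (S' : Set (W →ₗ[k] W)) :
    {t : V ⊗[k] W | (∀ g ∈ S, TensorProduct.map g LinearMap.id t = t) ∧
        (∀ g' ∈ S', TensorProduct.map LinearMap.id g' t = t)} =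
      ↑(Submodule.span k {t : V ⊗[k] W |
          ∃ x ∈ {x : V | ∀ g ∈ S, g x = x},
          ∃ y ∈ {y : W | ∀ g' ∈ S', g' y = y}, t = x ⊗ₜ[k] y}) :=
  stmt_7_general S S'
end
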